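/- There exists C > 0 such that for each sign σ ∈ {+1,−1} and all nonnegative square-summable sequences f, g, h : ℤ → [0,∞): Σ_{n₁, n₂ ∈ ℤ} ( ⟨n₁⟩^{−1/2} ( ⟨n₁−n₂⟩ + ⟨n₂⟩ ) / ( ⟨Φ_σ⟩^{1/2} ⟨n₂⟩^{1/2} ) ) f_{n₁−n₂} g_{n₁} h_{n₂} ≤ C ‖f‖_{ℓ²} ‖g‖_{ℓ²} ‖h‖_{ℓ²}. -/

import Mathlib

open scoped ENNReal NNReal

/-- `⟨x⟩ = (1+x²)^{1/2}`. -/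
noncomputable def jbR (x : ℝ) : ℝ := Real.sqrt (1 + x ^ 2)

/-- The Zakharov phase `Φ_σ = n₁² - n₂² + σ⟨n₀⟩` with `n₀ = n₁ - n₂`. -/
noncomputable def PhiZak (σ : ℝ) (n₁ n₂ : ℤ) : ℝ :=
  ((n₁ ^ 2 - n₂ ^ 2 : ℤ) : ℝ) + σ * jbR ((n₁ - n₂ : ℤ) : ℝ)

/-- The `ℓ²(ℤ)` norm (valued in `[0,∞]`). -/
noncomputable def l2Z (ω : ℤ → ℝ≥0) : ℝ≥0∞ :=
  (∑' n : ℤ, ((ω n : ℝ≥0∞)) ^ 2) ^ (1/2 : ℝ)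

/-!
With `k = n₁ - n₂` and `t = n₁ + n₂` the phase is `k t + σ⟨k⟩`, which gives
`⟨k⟩⟨t⟩ ≤ ⟨Φ_σ⟩ + (|σ| + 2)(⟨k⟩ + ⟨t⟩)` without any case distinction between resonant and
non-resonant frequencies. Together with the triangle inequalities among `⟨n₁⟩, ⟨n₂⟩, ⟨k⟩, ⟨t⟩`,
this bounds the multiplier by a multiple of `⟨n₁⟩⁻¹ + ⟨n₂⟩⁻¹ + ⟨k⟩⁻¹ + ⟨t⟩⁻¹`. In each of the four
resulting sums the inverse bracket is square summable, and the four factors split into two pairs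
whose arguments depend injectively on `(n₁, n₂)`, so Cauchy–Schwarz over `ℤ × ℤ` concludes.
-/

section EllTwo

variable {ι κ : Type*}

/-- The `ℓ²` norm of an extended nonnegative family; unlike `l2Z`, it applies to arbitrary index
types and to families that may take the value `∞`. -/
noncomputable def ellTwoNorm (F : ι → ℝ≥0∞) : ℝ≥0∞ := (∑' i, F i ^ 2) ^ (1 / 2 : ℝ)

theorem tsum_mul_le_ellTwoNorm_mul (F G : ι → ℝ≥0∞) :
    ∑' i, F i * G i ≤ ellTwoNorm F * ellTwoNorm G := by
  let _ : MeasurableSpace ι := ⊤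
  have holder := ENNReal.lintegral_mul_le_Lp_mul_Lq (MeasureTheory.Measure.count (α := ι))
    Real.HolderConjugate.two_two (measurable_from_top (f := F)).aemeasurable
    (measurable_from_top (f := G)).aemeasurable
  simpa [ellTwoNorm, MeasureTheory.lintegral_count] using holder

theorem ellTwoNorm_comp_le_of_injective {e : ι → κ} (he : Function.Injective e)
    (F : κ → ℝ≥0∞) : ellTwoNorm (fun i => F (e i)) ≤ ellTwoNorm F := by
  unfold ellTwoNorm
  gcongr
  exact ENNReal.tsum_comp_le_tsum_of_injective he fun j => F j ^ 2

theorem ellTwoNorm_mul_prod (F : ι → ℝ≥0∞) (G : κ → ℝ≥0∞) :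
    ellTwoNorm (fun p : ι × κ => F p.1 * G p.2) = ellTwoNorm F * ellTwoNorm G := by
  simp only [ellTwoNorm, mul_pow, ENNReal.tsum_prod', ENNReal.tsum_mul_left,
    ENNReal.tsum_mul_right]
  exact ENNReal.mul_rpow_of_nonneg _ _ (by norm_num)

theorem tsum_mul_mul_mul_le_ellTwoNorm {α β γ δ : Type*} {a : ι → α} {b : ι → β} {c : ι → γ}
    {d : ι → δ} (hab : Function.Injective fun i => (a i, b i))
    (hcd : Function.Injective fun i => (c i, d i))
    (A : α → ℝ≥0∞) (B : β → ℝ≥0∞) (C : γ → ℝ≥0∞) (D : δ → ℝ≥0∞) :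
    ∑' i, A (a i) * B (b i) * (C (c i) * D (d i)) ≤
      ellTwoNorm A * ellTwoNorm B * (ellTwoNorm C * ellTwoNorm D) :=
  calc
    _ ≤ ellTwoNorm (fun i => A (a i) * B (b i)) * ellTwoNorm (fun i => C (c i) * D (d i)) :=
      tsum_mul_le_ellTwoNorm_mul _ _
    _ ≤ ellTwoNorm (fun p : α × β => A p.1 * B p.2) *
          ellTwoNorm (fun p : γ × δ => C p.1 * D p.2) :=
      mul_le_mul' (ellTwoNorm_comp_le_of_injective hab _) (ellTwoNorm_comp_le_of_injective hcd _)
    _ = _ := by rw [ellTwoNorm_mul_prod, ellTwoNorm_mul_prod]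

end EllTwo

section JapaneseBracket

theorem jbR_sq (x : ℝ) : jbR x ^ 2 = 1 + x ^ 2 := Real.sq_sqrt (by positivity)

theorem one_le_jbR (x : ℝ) : 1 ≤ jbR x := Real.one_le_sqrt.2 (by nlinarith [sq_nonneg x])

theorem jbR_pos (x : ℝ) : 0 < jbR x := zero_lt_one.trans_le (one_le_jbR x)

theorem inv_jbR_nonneg (x : ℝ) : 0 ≤ (jbR x)⁻¹ := (inv_pos.2 (jbR_pos x)).le

theorem abs_le_jbR (x : ℝ) : |x| ≤ jbR x := Real.abs_le_sqrt (by linarith)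

theorem jbR_le_one_add_abs (x : ℝ) : jbR x ≤ 1 + |x| := by
  simpa [jbR] using sqrt_one_add_norm_sq_le x

theorem jbR_sub_le (x y : ℝ) : jbR (x - y) ≤ jbR x + jbR y := by
  have cross : |x| * |y| ≤ jbR x * jbR y :=
    mul_le_mul (abs_le_jbR x) (abs_le_jbR y) (abs_nonneg y) (jbR_pos x).le
  refine le_of_sq_le_sq ?_ (add_pos (jbR_pos x) (jbR_pos y)).le
  rw [add_sq, jbR_sq, jbR_sq, jbR_sq]
  linarith [neg_le_abs (x * y), abs_mul x y, sub_sq x y]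

theorem jbR_mul_jbR_le (σ x y : ℝ) :
    jbR x * jbR y ≤ jbR (x * y + σ * jbR x) + (|σ| + 2) * (jbR x + jbR y) := by
  have product : jbR x * jbR y ≤ (1 + |x|) * (1 + |y|) :=
    mul_le_mul (jbR_le_one_add_abs x) (jbR_le_one_add_abs y) (jbR_pos y).le (by positivity)
  have phase : |x| * |y| ≤ |x * y + σ * jbR x| + |σ| * jbR x := by
    simpa [abs_mul, abs_of_pos (jbR_pos x)] using abs_sub (x * y + σ * jbR x) (σ * jbR x)
  have remainder : 0 ≤ |σ| * jbR y := mul_nonneg (abs_nonneg σ) (jbR_pos y).le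
  linarith [abs_le_jbR x, abs_le_jbR y, one_le_jbR x, one_le_jbR y,
    abs_le_jbR (x * y + σ * jbR x)]

/-- The inverse Japanese bracket `⟨n⟩⁻¹` on `ℤ`, with values in `[0,∞]`. -/
noncomputable def jbInv (n : ℤ) : ℝ≥0∞ := ENNReal.ofReal (jbR n)⁻¹

theorem summable_inv_one_add_int_sq : Summable fun n : ℤ => (1 + (n : ℝ) ^ 2)⁻¹ := by
  refine Summable.of_norm_bounded_eventually
    (Real.summable_one_div_int_pow.2 one_lt_two) ?_
  filter_upwards [(Set.finite_singleton (0 : ℤ)).compl_mem_cofinite] with n hn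
  have n_ne_zero : (n : ℝ) ≠ 0 := Int.cast_ne_zero.2 hn
  rw [Real.norm_of_nonneg (by positivity), ← one_div]
  exact one_div_le_one_div_of_le (by positivity) (by linarith)

theorem ellTwoNorm_jbInv_ne_top : ellTwoNorm jbInv ≠ ∞ := by
  refine ENNReal.rpow_ne_top_of_nonneg (by norm_num) ?_
  have sq_eq (n : ℤ) : jbInv n ^ 2 = ENNReal.ofReal (1 + (n : ℝ) ^ 2)⁻¹ := by
    rw [jbInv, ← ENNReal.ofReal_pow (inv_jbR_nonneg n), inv_pow, jbR_sq]
  simpa only [sq_eq] using summable_inv_one_add_int_sq.tsum_ofReal_ne_top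

end JapaneseBracket

section TriangleInequalities

-- `a, b, d, s, P` stand for `⟨n₁⟩, ⟨n₂⟩, ⟨n₁ - n₂⟩, ⟨n₁ + n₂⟩, ⟨Φ_σ⟩`, and `ratio` in a name
-- refers to `d / b + 2 * (d / a) + 1`, which dominates `(d + b) ^ 2 / (2 * a * b)`.
variable {a b d s P K : ℝ}

theorem add_sq_le_of_triangle (ha : 0 < a) (hb : 0 < b) (hd : 0 ≤ d) (hdab : d ≤ a + b)
    (hbad : b ≤ a + d) : (d + b) ^ 2 ≤ 2 * (a * b) * (d / b + 2 * (d / a) + 1) := by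
  have expand : 2 * (a * b) * (d / b + 2 * (d / a) + 1) = 2 * d * (a + b) + 2 * b * (a + d) := by
    field_simp
    ring
  rw [expand]
  nlinarith [mul_le_mul_of_nonneg_left hdab hd, mul_le_mul_of_nonneg_left hbad hb.le,
    sq_nonneg (d - b)]

theorem ratio_le_mul_inv_sum_sq (ha : 0 < a) (hb : 0 < b) (hd : 0 < d) (hs : 0 < s) :
    d / b + 2 * (d / a) + 1 ≤ d * s * (a⁻¹ + b⁻¹ + d⁻¹ + s⁻¹) ^ 2 := by
  have cross : a⁻¹ * s⁻¹ * 2 + b⁻¹ * s⁻¹ + d⁻¹ * s⁻¹ ≤ (a⁻¹ + b⁻¹ + d⁻¹ + s⁻¹) ^ 2 := by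
    rw [← sub_nonneg]
    ring_nf
    positivity
  calc
    d / b + 2 * (d / a) + 1 = d * s * (a⁻¹ * s⁻¹ * 2 + b⁻¹ * s⁻¹ + d⁻¹ * s⁻¹) := by
      field_simp
      ring
    _ ≤ _ := by gcongr

theorem ratio_mul_inv_add_inv_le (ha : 0 < a) (hb : 0 < b) (hd : 0 < d) (hs : 0 < s)
    (hda : d ≤ s + 2 * a) (hdb : d ≤ s + 2 * b) :
    (d / b + 2 * (d / a) + 1) * (d⁻¹ + s⁻¹) ≤ 7 * (a⁻¹ + b⁻¹ + d⁻¹ + s⁻¹) := by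
  have ratio_le {c : ℝ} (hc : 0 < c) (hdc : d ≤ s + 2 * c) : d / c * s⁻¹ ≤ c⁻¹ + 2 * s⁻¹ := by
    calc
      d / c * s⁻¹ ≤ (s + 2 * c) / c * s⁻¹ := by gcongr
      _ = _ := by field_simp
  have expand : (d / b + 2 * (d / a) + 1) * (d⁻¹ + s⁻¹) =
      b⁻¹ + 2 * a⁻¹ + d⁻¹ + d / b * s⁻¹ + 2 * (d / a * s⁻¹) + s⁻¹ := by
    field_simp
    ring
  rw [expand]
  linarith [ratio_le ha hda, ratio_le hb hdb, inv_pos.2 ha, inv_pos.2 hb, inv_pos.2 hd]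

theorem one_le_mul_inv_sum (ha : 0 < a) (hb : 0 < b) (hd : 0 < d) (hs : 1 ≤ s) (hP : 1 ≤ P)
    (hK : 0 ≤ K) (hphase : d * s ≤ P + K * (d + s)) :
    1 ≤ (1 + K) * P * (a⁻¹ + b⁻¹ + d⁻¹ + s⁻¹) := by
  have sum_le : d⁻¹ + s⁻¹ ≤ a⁻¹ + b⁻¹ + d⁻¹ + s⁻¹ := by
    linarith [inv_pos.2 ha, inv_pos.2 hb]
  have hs0 : 0 < s := by linarith
  calc
    1 = d⁻¹ * s⁻¹ * (d * s) := by field_simp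
    _ ≤ d⁻¹ * s⁻¹ * (P + K * (d + s)) := by gcongr
    _ = P * (d⁻¹ * s⁻¹) + K * (1 * (d⁻¹ + s⁻¹)) := by field_simp; ring
    _ ≤ P * (d⁻¹ * 1 + s⁻¹) + K * (P * (d⁻¹ + s⁻¹)) := by
      have product_le : d⁻¹ * s⁻¹ ≤ d⁻¹ * 1 := by
        gcongr
        exact inv_le_one_of_one_le₀ hs
      gcongr
      linarith [inv_pos.2 hs0]
    _ = (1 + K) * P * (d⁻¹ + s⁻¹) := by ring
    _ ≤ _ := by gcongr

theorem ratio_le_of_phase (ha : 0 < a) (hb : 0 < b) (hd : 0 < d) (hs : 1 ≤ s) (hP : 1 ≤ P)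
    (hK : 0 ≤ K) (hphase : d * s ≤ P + K * (d + s)) (hda : d ≤ s + 2 * a)
    (hdb : d ≤ s + 2 * b) :
    d / b + 2 * (d / a) + 1 ≤ 7 * (1 + K) ^ 2 * P * (a⁻¹ + b⁻¹ + d⁻¹ + s⁻¹) ^ 2 := by
  have hs0 : 0 < s := by linarith
  have nonresonant := ratio_le_mul_inv_sum_sq ha hb hd hs0
  have resonant := ratio_mul_inv_add_inv_le ha hb hd hs0 hda hdb
  have one_le := one_le_mul_inv_sum ha hb hd hs hP hK hphase
  set S := a⁻¹ + b⁻¹ + d⁻¹ + s⁻¹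
  set Q := d / b + 2 * (d / a) + 1
  have : 0 ≤ S := by positivity
  have : 0 ≤ Q := by positivity
  -- Only the first power of `S` controls the resonant part; the missing factor comes from `one_le`.
  calc
    Q = Q * (d⁻¹ * s⁻¹) * (d * s) := by field_simp
    _ ≤ Q * (d⁻¹ * s⁻¹) * (P + K * (d + s)) := by gcongr
    _ = P * (Q * (d⁻¹ * s⁻¹)) + K * (Q * (d⁻¹ + s⁻¹)) := by field_simp; ring
    _ ≤ P * (d * s * S ^ 2 * (d⁻¹ * s⁻¹)) + K * (7 * S * 1) := by
      rw [mul_one]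
      gcongr
    _ ≤ P * (d * s * S ^ 2 * (d⁻¹ * s⁻¹)) + K * (7 * S * ((1 + K) * P * S)) := by gcongr
    _ = (1 + 7 * K * (1 + K)) * (P * S ^ 2) := by field_simp
    _ ≤ (7 * (1 + K) ^ 2) * (P * S ^ 2) := by gcongr; nlinarith
    _ = _ := by ring

end TriangleInequalities

section Multiplier

theorem jbR_sub_add_jbR_sq_le (σ x y : ℝ) :
    (jbR (x - y) + jbR y) ^ 2 ≤
      (12 * (1 + |σ|) * ((jbR x)⁻¹ + (jbR y)⁻¹ + (jbR (x - y))⁻¹ + (jbR (x + y))⁻¹)) ^ 2 *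
        (jbR x * jbR ((x - y) * (x + y) + σ * jbR (x - y)) * jbR y) := by
  have hdxy := jbR_sub_le x y
  have hydx : jbR y ≤ jbR x + jbR (x - y) := by simpa using jbR_sub_le x (x - y)
  have hxsy : jbR x ≤ jbR (x + y) + jbR y := by simpa using jbR_sub_le (x + y) y
  have hysx : jbR y ≤ jbR (x + y) + jbR x := by simpa using jbR_sub_le (x + y) x
  have ratio_le := ratio_le_of_phase (jbR_pos x) (jbR_pos y) (jbR_pos (x - y)) (one_le_jbR (x + y))
    (one_le_jbR _) (by positivity) (jbR_mul_jbR_le σ (x - y) (x + y)) (by linarith) (by linarith)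
  have hx := jbR_pos x
  have hy := jbR_pos y
  have hphase := jbR_pos ((x - y) * (x + y) + σ * jbR (x - y))
  set S := (jbR x)⁻¹ + (jbR y)⁻¹ + (jbR (x - y))⁻¹ + (jbR (x + y))⁻¹
  set P := jbR ((x - y) * (x + y) + σ * jbR (x - y))
  have constant : 14 * (1 + (|σ| + 2)) ^ 2 ≤ (12 * (1 + |σ|)) ^ 2 := by nlinarith [abs_nonneg σ]
  calc
    _ ≤ 2 * (jbR x * jbR y) * (jbR (x - y) / jbR y + 2 * (jbR (x - y) / jbR x) + 1) :=
      add_sq_le_of_triangle hx hy (jbR_pos _).le hdxy hydx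
    _ ≤ 2 * (jbR x * jbR y) * (7 * (1 + (|σ| + 2)) ^ 2 * P * S ^ 2) := by gcongr
    _ = 14 * (1 + (|σ| + 2)) ^ 2 * (S ^ 2 * (jbR x * P * jbR y)) := by ring
    _ ≤ (12 * (1 + |σ|)) ^ 2 * (S ^ 2 * (jbR x * P * jbR y)) := by gcongr
    _ = _ := by ring

theorem PhiZak_eq (σ : ℝ) (n₁ n₂ : ℤ) :
    PhiZak σ n₁ n₂ = (n₁ - n₂ : ℝ) * (n₁ + n₂) + σ * jbR (n₁ - n₂) := by
  rw [PhiZak]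
  push_cast
  ring

/-- The multiplier `⟨n₁⟩^{-1/2} (⟨n₁-n₂⟩ + ⟨n₂⟩) / (⟨Φ_σ⟩^{1/2} ⟨n₂⟩^{1/2})` of the trilinear
form, for an arbitrary real coefficient `σ` in the phase. -/
noncomputable def zakharovWeight (σ : ℝ) (n₁ n₂ : ℤ) : ℝ :=
  jbR (n₁ : ℝ) ^ (-(1 / 2) : ℝ) * (jbR ((n₁ - n₂ : ℤ) : ℝ) + jbR (n₂ : ℝ)) /
    (jbR (PhiZak σ n₁ n₂) ^ (1 / 2 : ℝ) * jbR (n₂ : ℝ) ^ (1 / 2 : ℝ))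

theorem zakharovWeight_sq (σ : ℝ) (n₁ n₂ : ℤ) :
    zakharovWeight σ n₁ n₂ ^ 2 =
      (jbR (n₁ - n₂) + jbR n₂) ^ 2 / (jbR n₁ * jbR (PhiZak σ n₁ n₂) * jbR n₂) := by
  have rpow_half_sq (x : ℝ) : (jbR x ^ (1 / 2 : ℝ)) ^ 2 = jbR x := by
    rw [← Real.sqrt_eq_rpow, Real.sq_sqrt (jbR_pos x).le]
  rw [zakharovWeight, Real.rpow_neg (jbR_pos _).le, div_pow, mul_pow, mul_pow, inv_pow,
    rpow_half_sq, rpow_half_sq, rpow_half_sq, Int.cast_sub, inv_mul_eq_div, div_div, mul_assoc]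

theorem zakharovWeight_le (σ : ℝ) (n₁ n₂ : ℤ) :
    zakharovWeight σ n₁ n₂ ≤ 12 * (1 + |σ|) *
      ((jbR n₁)⁻¹ + (jbR n₂)⁻¹ + (jbR (n₁ - n₂))⁻¹ + (jbR (n₁ + n₂))⁻¹) := by
  have denominator_pos : 0 < jbR n₁ * jbR (PhiZak σ n₁ n₂) * jbR n₂ :=
    mul_pos (mul_pos (jbR_pos _) (jbR_pos _)) (jbR_pos _)
  refine le_of_sq_le_sq ?_ (mul_nonneg (by positivity) ?_)
  · rw [zakharovWeight_sq, div_le_iff₀ denominator_pos, PhiZak_eq]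
    exact jbR_sub_add_jbR_sq_le σ n₁ n₂
  · linarith [inv_jbR_nonneg n₁, inv_jbR_nonneg n₂, inv_jbR_nonneg (n₁ - n₂),
      inv_jbR_nonneg (n₁ + n₂)]

theorem ofReal_zakharovWeight_le (σ : ℝ) (n₁ n₂ : ℤ) :
    ENNReal.ofReal (zakharovWeight σ n₁ n₂) ≤ ENNReal.ofReal (12 * (1 + |σ|)) *
      (jbInv n₁ + jbInv n₂ + jbInv (n₁ - n₂) + jbInv (n₁ + n₂)) := by
  refine (ENNReal.ofReal_le_ofReal (zakharovWeight_le σ n₁ n₂)).trans_eq ?_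
  rw [ENNReal.ofReal_mul (by positivity),
    ENNReal.ofReal_add (add_nonneg (add_nonneg (inv_jbR_nonneg _) (inv_jbR_nonneg _))
      (inv_jbR_nonneg _)) (inv_jbR_nonneg _),
    ENNReal.ofReal_add (add_nonneg (inv_jbR_nonneg _) (inv_jbR_nonneg _)) (inv_jbR_nonneg _),
    ENNReal.ofReal_add (inv_jbR_nonneg _) (inv_jbR_nonneg _)]
  simp only [jbInv, Int.cast_sub, Int.cast_add]

end Multiplier

theorem tsum_jbInv_mul_le (f g h : ℤ → ℝ≥0∞) :
    ∑' p : ℤ × ℤ, (jbInv p.1 + jbInv p.2 + jbInv (p.1 - p.2) + jbInv (p.1 + p.2)) *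
        (f (p.1 - p.2) * g p.1 * h p.2) ≤
      4 * ellTwoNorm jbInv * (ellTwoNorm f * ellTwoNorm g * ellTwoNorm h) := by
  have inj_id : Function.Injective fun p : ℤ × ℤ => (p.1, p.2) := fun _ _ hpq => hpq
  have inj_fst_sub : Function.Injective fun p : ℤ × ℤ => (p.1, p.1 - p.2) := by
    rintro ⟨m, n⟩ ⟨m', n'⟩ hpq
    grind
  have inj_fst_add : Function.Injective fun p : ℤ × ℤ => (p.1, p.1 + p.2) := by
    rintro ⟨m, n⟩ ⟨m', n'⟩ hpq
    grind
  have inj_sub_snd : Function.Injective fun p : ℤ × ℤ => (p.1 - p.2, p.2) := by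
    rintro ⟨m, n⟩ ⟨m', n'⟩ hpq
    grind
  calc
    _ = ∑' p : ℤ × ℤ, (jbInv p.1 * h p.2 * (g p.1 * f (p.1 - p.2)) +
          g p.1 * jbInv p.2 * (f (p.1 - p.2) * h p.2) +
          g p.1 * jbInv (p.1 - p.2) * (f (p.1 - p.2) * h p.2) +
          g p.1 * jbInv (p.1 + p.2) * (f (p.1 - p.2) * h p.2)) :=
      tsum_congr fun p => by ring
    _ ≤ ellTwoNorm jbInv * ellTwoNorm h * (ellTwoNorm g * ellTwoNorm f) +
          ellTwoNorm g * ellTwoNorm jbInv * (ellTwoNorm f * ellTwoNorm h) +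
          ellTwoNorm g * ellTwoNorm jbInv * (ellTwoNorm f * ellTwoNorm h) +
          ellTwoNorm g * ellTwoNorm jbInv * (ellTwoNorm f * ellTwoNorm h) := by
      rw [ENNReal.tsum_add, ENNReal.tsum_add, ENNReal.tsum_add]
      exact add_le_add (add_le_add (add_le_add
        (tsum_mul_mul_mul_le_ellTwoNorm inj_id inj_fst_sub _ _ _ _)
        (tsum_mul_mul_mul_le_ellTwoNorm inj_id inj_sub_snd _ _ _ _))
        (tsum_mul_mul_mul_le_ellTwoNorm inj_fst_sub inj_sub_snd _ _ _ _))
        (tsum_mul_mul_mul_le_ellTwoNorm inj_fst_add inj_sub_snd _ _ _ _)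
    _ = _ := by ring

theorem tsum_zakharovWeight_mul_le (σ : ℝ) (f g h : ℤ → ℝ≥0∞) :
    ∑' p : ℤ × ℤ, ENNReal.ofReal (zakharovWeight σ p.1 p.2) *
        f (p.1 - p.2) * g p.1 * h p.2 ≤
      ENNReal.ofReal (12 * (1 + |σ|)) *
        (4 * ellTwoNorm jbInv * (ellTwoNorm f * ellTwoNorm g * ellTwoNorm h)) := by
  refine le_trans ?_ (mul_le_mul_right (tsum_jbInv_mul_le f g h) _)
  rw [← ENNReal.tsum_mul_left]
  refine ENNReal.tsum_le_tsum fun p => ?_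
  rw [mul_assoc, mul_assoc, ← mul_assoc (f _), ← mul_assoc (ENNReal.ofReal (12 * (1 + |σ|)))]
  gcongr
  exact ofReal_zakharovWeight_le σ p.1 p.2

theorem Zakharov_W3_general :
    ∃ C : ℝ, 0 < C ∧ ∀ (σ : ℝ) (f g h : ℤ → ℝ≥0∞),
      ∑' p : ℤ × ℤ, ENNReal.ofReal (zakharovWeight σ p.1 p.2) *
          f (p.1 - p.2) * g p.1 * h p.2 ≤
        ENNReal.ofReal (C * (1 + |σ|)) * (ellTwoNorm f * ellTwoNorm g * ellTwoNorm h) := by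
  refine ⟨48 * (ellTwoNorm jbInv).toReal + 1, by positivity, fun σ f g h =>
    (tsum_zakharovWeight_mul_le σ f g h).trans ?_⟩
  rw [← mul_assoc]
  gcongr
  calc
    ENNReal.ofReal (12 * (1 + |σ|)) * (4 * ellTwoNorm jbInv) =
        ENNReal.ofReal (48 * (ellTwoNorm jbInv).toReal * (1 + |σ|)) := by
      rw [← ENNReal.ofReal_toReal (a := 4 * ellTwoNorm jbInv)
        (ENNReal.mul_ne_top (by norm_num) ellTwoNorm_jbInv_ne_top),
        ← ENNReal.ofReal_mul (by positivity), ENNReal.toReal_mul, ENNReal.toReal_ofNat]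
      ring_nf
    _ ≤ _ := by
      gcongr
      linarith

/-- The Zakharov trilinear weight estimate with weight
`⟨n₁⟩^{-1/2} (⟨n₁-n₂⟩ + ⟨n₂⟩) / (⟨Φ_σ⟩^{1/2} ⟨n₂⟩^{1/2})`. -/
theorem Zakharov_W3 :
    ∃ C : ℝ, 0 < C ∧
      ∀ σ : ℝ, (σ = 1 ∨ σ = -1) →
        ∀ f g h : ℤ → ℝ≥0,
          Summable (fun n => f n ^ 2) → Summable (fun n => g n ^ 2) →
          Summable (fun n => h n ^ 2) →
          (∑' p : ℤ × ℤ,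
              ENNReal.ofReal (jbR (p.1 : ℝ) ^ (-(1/2) : ℝ) *
                  (jbR ((p.1 - p.2 : ℤ) : ℝ) + jbR (p.2 : ℝ)) /
                  (jbR (PhiZak σ p.1 p.2) ^ (1/2 : ℝ) * jbR (p.2 : ℝ) ^ (1/2 : ℝ))) *
                (f (p.1 - p.2) : ℝ≥0∞) * (g p.1 : ℝ≥0∞) * (h p.2 : ℝ≥0∞))
            ≤ ENNReal.ofReal C * (l2Z f * l2Z g * l2Z h) := by
  obtain ⟨C, hC, bound⟩ := Zakharov_W3_general
  exact ⟨C * (1 + 1), by positivity, fun σ hσ f g h _ _ _ =>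
    (bound σ (f ·) (g ·) (h ·)).trans_eq (by rw [(abs_eq zero_le_one).2 hσ]; rfl)⟩
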